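/- Let T=(V,w) be an n-weighted tournament with m>2 alternatives, let a∈wUC(T) and d∈V∖wUC(T). Then −log₂(m)·(⌊n/2⌋+1) ≤ MoV_wUC(d,T) and MoV_wUC(a,T) ≤ (⌊n/2⌋+1) + ⌊n·(m−2)/2⌋. Moreover the upper bound is tight: for every even n and every m>2 there is an n-weighted tournament with a wUC winner a satisfying MoV_wUC(a,T) = (⌊n/2⌋+1) + ⌊n·(m−2)/2⌋. -/

import Mathlib

/-!
Every reversal needed here only raises one alternative: it adds a nonnegative amount `c y` to
`w b y` for each `y`, at total cost `∑ y, c y` (`raise`, `raise_size`).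

*Winners.* To make `b` cover `a`, raise `w b a` to a strict majority `n / 2 + 1` and each other
`w b z` to at least `w a z`. For distinct `b, z ≠ a` the deficits `(w a z - w b z)⁺` and
`(w a b - w z b)⁺` add up to at most `n`, since `w b z + w z b = n`. Averaging the cost over all
`b ≠ a` gives at most `n / 2 + 1 + n (m - 2) / 2`, so some `b` is that cheap
(`exists_cheap_coverer`).

*Non-winners.* If `d` is given a strict majority over `z`, then neither `z` nor any `y` with
`w y z ≤ n / 2` covers `d` any more. Hence it suffices to do so for all `z` in a set dominating the
alternatives other than `d` in the weak majority relation. A vertex of at least average outdegree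
dominates half of the remaining ones, so a greedy choice produces a dominating set of at most
`log₂ m` alternatives (`exists_dominating`).

*Tightness.* Let `a` beat every alternative `n : 0` and let all other pairs be tied. If `b` is to
cover `a`, the pair `(b, a)` must change by at least `n / 2 + 1`, and for each other `z` the pairs `(b, z)`
and `(z, a)` together must change by at least `n / 2` (`extremal_le_size`).
-/

/-- An `n`-weighted tournament on vertex set `V`. -/
structure WTournament (V : Type) (n : ℕ) where
  w : V → V → ℤ
  diag : ∀ x, w x x = 0
  nonneg : ∀ x y, x ≠ y → 0 ≤ w x y
  compl : ∀ x y, x ≠ y → w x y + w y x = (n : ℤ)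

namespace WTournament

variable {V : Type} {n : ℕ}

/-- The (majority) margin of `x` over `y`. -/
def margin (T : WTournament V n) (x y : V) : ℤ :=
  T.w x y - T.w y x

/-- The Borda score of `x`. -/
def sBO [Fintype V] (T : WTournament V n) (x : V) : ℤ :=
  ∑ z, T.w x z

/-- The set of Borda winners. -/
def BO [Fintype V] (T : WTournament V n) : Set V :=
  {x | ∀ y, T.sBO y ≤ T.sBO x}

/-- The weighted outdegree of `x`. -/
def wdeg [Fintype V] (T : WTournament V n) (x : V) : ℤ :=
  ∑ z, T.w x z

/-- `x` w-covers `y`. -/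
def WCovers (T : WTournament V n) (x y : V) : Prop :=
  0 < T.margin x y ∧ ∀ z, z ≠ x → z ≠ y → T.w y z ≤ T.w x z

/-- The weighted uncovered set. -/
def wUC (T : WTournament V n) : Set V :=
  {x | ∀ y, ¬ T.WCovers y x}

/-- The consecutive edges of a vertex sequence. -/
def seqEdges (l : List V) : List (V × V) :=
  l.zip l.tail

/-- A dominance cycle. -/
def IsDominanceCycle (T : WTournament V n) (l : List V) : Prop :=
  2 ≤ l.length ∧ l.head? = l.getLast? ∧ ∀ e ∈ seqEdges l, 0 < T.margin e.1 e.2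

/-- The splitting number of a cycle. -/
def splitNum (T : WTournament V n) (l : List V) : ℤ :=
  ((seqEdges l).map fun e => T.margin e.1 e.2).foldr min (n : ℤ)

/-- `e` is a splitting edge of the cycle `l`. -/
def IsSplittingEdge (T : WTournament V n) (l : List V) (e : V × V) : Prop :=
  e ∈ seqEdges l ∧ T.margin e.1 e.2 = T.splitNum l

/-- `(x, y)` is an edge of the margin graph surviving the deletion of every splitting
edge of every dominance cycle (i.e. an edge of `M_D`). -/
def EdgeMD (T : WTournament V n) (x y : V) : Prop :=
  0 < T.margin x y ∧
    ¬ ∃ l : List V, T.IsDominanceCycle l ∧ T.IsSplittingEdge l (x, y)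

/-- The set of Split Cycle winners. -/
def SC (T : WTournament V n) : Set V :=
  {x | ∀ y, ¬ T.EdgeMD y x}

/-- A reversal function for the tournament `T`. -/
structure Reversal (T : WTournament V n) where
  r : V → V → ℤ
  antisymm : ∀ x y, r x y = - r y x
  lo : ∀ x y, x ≠ y → 0 ≤ T.w x y + r x y
  hi : ∀ x y, x ≠ y → T.w x y + r x y ≤ (n : ℤ)

/-- The size of a reversal function. -/
def Reversal.size [Fintype V] {T : WTournament V n} (R : Reversal T) : ℤ :=
  ∑ x : V, ∑ y : V, max (R.r x y) 0

/-- The tournament obtained from `T` by the reversal `R`. -/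
def apply (T : WTournament V n) (R : Reversal T) : WTournament V n :=
  { w := fun x y => T.w x y + R.r x y
    diag := fun x => by
      have h := R.antisymm x x
      have h1 := T.diag x
      show T.w x x + R.r x x = 0
      linarith
    nonneg := fun x y h => R.lo x y h
    compl := fun x y h => by
      have h1 := R.antisymm x y
      have h2 := T.compl x y h
      show (T.w x y + R.r x y) + (T.w y x + R.r y x) = (n : ℤ)
      linarith }

/-- `R` witnesses the margin of victory of `a`: it is a destructive reversal set if
`a` is a winner and a constructive reversal set if `a` is a non-winner. -/
def IsMoVWitness (S : WTournament V n → Set V) (T : WTournament V n) (a : V)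
    (R : Reversal T) : Prop :=
  a ∈ S T ↔ a ∉ S (T.apply R)

open Classical in
/-- The margin of victory of `a` in `T` with respect to the tournament solution `S`:
the minimum size of a destructive reversal set for winners, and minus the minimum
size of a constructive reversal set for non-winners. -/
noncomputable def MoV [Fintype V] (S : WTournament V n → Set V)
    (T : WTournament V n) (a : V) : ℤ :=
  if a ∈ S T then
    sInf {k : ℤ | ∃ R : Reversal T, IsMoVWitness S T a R ∧ R.size = k}
  else
    - sInf {k : ℤ | ∃ R : Reversal T, IsMoVWitness S T a R ∧ R.size = k}

/-- The reversal values with `R (a, b) = 1`, `R (b, a) = -1` and `0` elsewhere. -/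
def singleFun [DecidableEq V] (a b : V) : V → V → ℤ := fun p q =>
  if p = a ∧ q = b then 1 else if p = b ∧ q = a then -1 else 0

/-- The reversal values with `Q (b, c) = -1`, `Q (c, b) = 1`, `Q (a, c) = 1`,
`Q (c, a) = -1` and `0` elsewhere. -/
def transferFun [DecidableEq V] (a b c : V) : V → V → ℤ := fun p q =>
  if p = b ∧ q = c then -1
  else if p = c ∧ q = b then 1
  else if p = a ∧ q = c then 1
  else if p = c ∧ q = a then -1
  else 0

/-- A monotonic tournament solution. -/
def IsMonotonic [DecidableEq V] (S : WTournament V n → Set V) : Prop :=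
  ∀ (T : WTournament V n) (a b : V) (R : Reversal T),
    a ≠ b → a ∈ S T → T.w a b < (n : ℤ) → R.r = singleFun a b →
    a ∈ S (T.apply R)

/-- A transfer-monotonic tournament solution. -/
def IsTransferMonotonic [DecidableEq V] (S : WTournament V n → Set V) : Prop :=
  ∀ (T : WTournament V n) (a b c : V) (Q : Reversal T),
    a ≠ b → a ≠ c → b ≠ c → a ∈ S T → 0 < T.w b c → T.w a c < (n : ℤ) →
    Q.r = transferFun a b c → a ∈ S (T.apply Q)

end WTournament

namespace WTournament

variable {V : Type} {n : ℕ}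

/-! ### Reversals and the margin of victory -/

lemma Reversal.size_nonneg [Fintype V] {T : WTournament V n} (R : Reversal T) : 0 ≤ R.size :=
  Finset.sum_nonneg fun _ _ => Finset.sum_nonneg fun _ _ => le_max_right _ _

lemma sInf_le_size [Fintype V] {S : WTournament V n → Set V} {T : WTournament V n} {a : V}
    {R : Reversal T} (h : IsMoVWitness S T a R) :
    sInf {k : ℤ | ∃ R : Reversal T, IsMoVWitness S T a R ∧ R.size = k} ≤ R.size :=
  csInf_le ⟨0, by rintro k ⟨R, -, rfl⟩; exact R.size_nonneg⟩ ⟨R, h, rfl⟩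

lemma MoV_le_size [Fintype V] {S : WTournament V n → Set V} {T : WTournament V n} {a : V}
    (ha : a ∈ S T) {R : Reversal T} (h : a ∉ S (T.apply R)) : MoV S T a ≤ R.size := by
  rw [MoV, if_pos ha]
  exact sInf_le_size (iff_of_true ha h)

lemma neg_size_le_MoV [Fintype V] {S : WTournament V n → Set V} {T : WTournament V n} {d : V}
    (hd : d ∉ S T) {R : Reversal T} (h : d ∈ S (T.apply R)) : -R.size ≤ MoV S T d := by
  rw [MoV, if_neg hd]
  exact neg_le_neg (sInf_le_size (iff_of_false hd (not_not_intro h)))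

/-- The reversal that increases `w b y` by `c y` for every `y`, leaving all pairs that do not
contain `b` unchanged. The value `c b` on the diagonal is required to be `0`. -/
def raise [DecidableEq V] (T : WTournament V n) (b : V) (c : V → ℤ) (hb : c b = 0)
    (h0 : ∀ y, 0 ≤ c y) (hn : ∀ y, y ≠ b → T.w b y + c y ≤ n) : Reversal T where
  r x y := (if x = b then c y else 0) - (if y = b then c x else 0)
  antisymm x y := by ring
  lo x y hxy := by
    have h1 := T.nonneg x y hxy
    have h2 := T.compl x y hxy
    by_cases hx : x = b
    · subst hx
      have := h0 y
      simp [hxy.symm]; linarith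
    · by_cases hy : y = b
      · subst hy
        have := hn x hx
        simp [hx]; linarith
      · simpa [hx, hy] using h1
  hi x y hxy := by
    have h1 := T.nonneg y x hxy.symm
    have h2 := T.compl x y hxy
    by_cases hx : x = b
    · subst hx
      have := hn y hxy.symm
      simpa [hxy.symm] using this
    · by_cases hy : y = b
      · subst hy
        have := h0 x
        simp [hx]; linarith
      · simp [hx, hy]; linarith

lemma raise_size [Fintype V] [DecidableEq V] (T : WTournament V n) (b : V) (c : V → ℤ)
    (hb : c b = 0) (h0 : ∀ y, 0 ≤ c y) (hn : ∀ y, y ≠ b → T.w b y + c y ≤ n) :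
    (T.raise b c hb h0 hn).size = ∑ y, c y := by
  have key : ∀ x y, max ((T.raise b c hb h0 hn).r x y) 0 = if x = b then c y else 0 := by
    intro x y
    simp only [raise]
    have hx := h0 x
    have hy := h0 y
    by_cases h1 : x = b <;> by_cases h2 : y = b <;> simp_all
  simp only [Reversal.size, key]
  rw [Finset.sum_comm]
  simp

lemma raise_w_left [DecidableEq V] (T : WTournament V n) {b : V} {c : V → ℤ}
    (hb : c b = 0) (h0 : ∀ y, 0 ≤ c y) (hn : ∀ y, y ≠ b → T.w b y + c y ≤ n) {y : V}
    (hy : y ≠ b) : (T.apply (T.raise b c hb h0 hn)).w b y = T.w b y + c y := by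
  simp [apply, raise, hy]

lemma raise_w_of_ne [DecidableEq V] (T : WTournament V n) {b : V} {c : V → ℤ}
    (hb : c b = 0) (h0 : ∀ y, 0 ≤ c y) (hn : ∀ y, y ≠ b → T.w b y + c y ≤ n) {x y : V}
    (hx : x ≠ b) (hy : y ≠ b) : (T.apply (T.raise b c hb h0 hn)).w x y = T.w x y := by
  simp [apply, raise, hx, hy]

lemma margin_pos_iff (T : WTournament V n) {x y : V} (h : x ≠ y) :
    0 < T.margin x y ↔ ((n / 2 : ℕ) : ℤ) + 1 ≤ T.w x y := by
  have := T.compl x y h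
  simp only [margin]
  omega

/-! ### Winners: making the cheapest alternative cover `a` -/

/-- The amount by which `w b y` has to be raised so that `b` covers `a`. -/
def coverCost [DecidableEq V] (T : WTournament V n) (a b y : V) : ℤ :=
  if y = b then 0
  else if y = a then max 0 (((n / 2 : ℕ) : ℤ) + 1 - T.w b a)
  else max 0 (T.w a y - T.w b y)

/-- Doubling and symmetrising the sum over ordered pairs of competitors bounds the average over
`b ≠ a` of the cost of making `b` cover `a`. -/
lemma exists_cheap_coverer [Fintype V] [DecidableEq V] (T : WTournament V n) (a : V)
    (hm : 2 < Fintype.card V) :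
    ∃ b, b ≠ a ∧ ∑ y, T.coverCost a b y ≤
      (((n / 2 : ℕ) : ℤ) + 1) + ((n * (Fintype.card V - 2) / 2 : ℕ) : ℤ) := by
  obtain ⟨k, hk⟩ : ∃ k, Fintype.card V = k + 2 := ⟨Fintype.card V - 2, by omega⟩
  set S : Finset V := Finset.univ.erase a with hS
  have hcard : S.card = k + 1 := by
    rw [hS, Finset.card_erase_of_mem (Finset.mem_univ a), Finset.card_univ, hk]; omega
  have hne : S.Nonempty := Finset.card_pos.mp (by omega)
  have hsplit : ∀ b ∈ S, ∑ y, T.coverCost a b y ≤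
      (((n / 2 : ℕ) : ℤ) + 1) + ∑ z ∈ S, T.coverCost a b z := by
    intro b hb
    have hba : b ≠ a := Finset.ne_of_mem_erase hb
    rw [← Finset.add_sum_erase _ _ (Finset.mem_univ a)]
    have := T.nonneg b a hba
    have h2 : T.coverCost a b a ≤ ((n / 2 : ℕ) : ℤ) + 1 := by
      rw [coverCost, if_neg hba.symm, if_pos rfl]
      omega
    linarith
  have hpair : ∀ b ∈ S, ∀ z ∈ S, T.coverCost a b z + T.coverCost a z b ≤
      if z = b then 0 else (n : ℤ) := by
    intro b hb z hz
    have hba : b ≠ a := Finset.ne_of_mem_erase hb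
    have hza : z ≠ a := Finset.ne_of_mem_erase hz
    by_cases h : z = b
    · subst h; simp [coverCost]
    · have h1 := T.compl b z (Ne.symm h)
      have h2 := T.nonneg b z (Ne.symm h)
      have h3 := T.nonneg z b h
      have h4 := T.compl a b hba.symm
      have h5 := T.nonneg b a hba
      have h6 := T.compl a z hza.symm
      have h7 := T.nonneg z a hza
      simp only [coverCost, if_neg h, if_neg (Ne.symm h), if_neg hba, if_neg hza]
      omega
  have hdouble : 2 * ∑ b ∈ S, ∑ z ∈ S, T.coverCost a b z ≤ ((k : ℤ) + 1) * (k * n) := by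
    have hcomm : ∑ b ∈ S, ∑ z ∈ S, T.coverCost a z b = ∑ b ∈ S, ∑ z ∈ S, T.coverCost a b z :=
      Finset.sum_comm
    calc 2 * ∑ b ∈ S, ∑ z ∈ S, T.coverCost a b z
        = ∑ b ∈ S, ∑ z ∈ S, (T.coverCost a b z + T.coverCost a z b) := by
          simp only [Finset.sum_add_distrib]
          rw [hcomm]; ring
      _ ≤ ∑ b ∈ S, ∑ z ∈ S, (if z = b then 0 else (n : ℤ)) :=
          Finset.sum_le_sum fun b hb => Finset.sum_le_sum fun z hz => hpair b hb z hz
      _ = ∑ b ∈ S, (k : ℤ) * n := by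
          refine Finset.sum_congr rfl fun b hb => ?_
          rw [← Finset.add_sum_erase _ _ hb, if_pos rfl, zero_add,
            Finset.sum_congr rfl (g := fun _ => (n : ℤ))
              (fun z hz => if_neg (Finset.ne_of_mem_erase hz)),
            Finset.sum_const, Finset.card_erase_of_mem hb, hcard]
          simp
      _ = ((k : ℤ) + 1) * (k * n) := by
          rw [Finset.sum_const, hcard]; simp
  obtain ⟨b, hb, hle⟩ : ∃ b ∈ S, 2 * ∑ y, T.coverCost a b y ≤
      2 * (((n / 2 : ℕ) : ℤ) + 1) + ((n * k : ℕ) : ℤ) := by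
    apply Finset.exists_le_of_sum_le hne
    calc ∑ b ∈ S, 2 * ∑ y, T.coverCost a b y
        ≤ ∑ b ∈ S, (2 * (((n / 2 : ℕ) : ℤ) + 1) + 2 * ∑ z ∈ S, T.coverCost a b z) :=
          Finset.sum_le_sum fun b hb => by linarith [hsplit b hb]
      _ = ((k : ℤ) + 1) * (2 * (((n / 2 : ℕ) : ℤ) + 1)) +
            2 * ∑ b ∈ S, ∑ z ∈ S, T.coverCost a b z := by
          rw [Finset.sum_add_distrib, Finset.sum_const, hcard, Finset.mul_sum]
          simp
      _ ≤ ((k : ℤ) + 1) * (2 * (((n / 2 : ℕ) : ℤ) + 1)) + ((k : ℤ) + 1) * (k * n) := by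
          linarith
      _ = ∑ b ∈ S, (2 * (((n / 2 : ℕ) : ℤ) + 1) + ((n * k : ℕ) : ℤ)) := by
          rw [Finset.sum_const, hcard]
          simp only [nsmul_eq_mul]
          push_cast
          ring
  refine ⟨b, Finset.ne_of_mem_erase hb, ?_⟩
  rw [hk, Nat.add_sub_cancel]
  omega

lemma exists_destructive [Fintype V] (hn : 0 < n) (T : WTournament V n) (a : V)
    (hm : 2 < Fintype.card V) :
    ∃ R : Reversal T, a ∉ (T.apply R).wUC ∧
      R.size ≤ (((n / 2 : ℕ) : ℤ) + 1) + ((n * (Fintype.card V - 2) / 2 : ℕ) : ℤ) := by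
  classical
  obtain ⟨b, hba, hcost⟩ := T.exists_cheap_coverer a hm
  have hb : T.coverCost a b b = 0 := by simp [coverCost]
  have h0 : ∀ y, 0 ≤ T.coverCost a b y := by
    intro y
    unfold coverCost
    split_ifs <;> simp
  have hle : ∀ y, y ≠ b → T.w b y + T.coverCost a b y ≤ n := by
    intro y hy
    have h1 := T.compl b y hy.symm
    have h2 := T.nonneg y b hy
    rw [coverCost, if_neg hy]
    split_ifs with h
    · subst h; omega
    · have h3 := T.compl a y (Ne.symm h)
      have h4 := T.nonneg y a h
      omega
  refine ⟨T.raise b (T.coverCost a b) hb h0 hle, ?_, by rwa [raise_size]⟩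
  intro hwin
  refine hwin b ⟨?_, fun z hzb hza => ?_⟩
  · rw [margin_pos_iff _ hba, raise_w_left _ _ _ _ hba.symm, coverCost, if_neg hba.symm,
      if_pos rfl]
    omega
  · rw [raise_w_left _ _ _ _ hzb, raise_w_of_ne _ _ _ _ hba.symm hzb, coverCost, if_neg hzb,
      if_neg hza]
    omega

/-! ### Non-winners: logarithmic dominating sets -/

/-- Greedy construction: some `z ∈ S` satisfies `w y z ≤ n / 2` for at least half of the
`y ∈ S \ {z}`, so the part of `S` not yet dominated is at least halved by every choice. -/
lemma exists_dominating [DecidableEq V] (T : WTournament V n) (S : Finset V) :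
    ∃ Z ⊆ S, 2 ^ Z.card ≤ S.card + 1 ∧
      ∀ y ∈ S, y ∈ Z ∨ ∃ z ∈ Z, y ≠ z ∧ 2 * T.w y z ≤ n := by
  induction S using Finset.strongInduction with
  | H S ih =>
    rcases S.eq_empty_or_nonempty with rfl | hne
    · exact ⟨∅, by simp⟩
    -- `bad z` counts the alternatives that `z` fails to dominate.
    let bad : V → Finset V := fun z => (S.erase z).filter fun y => (n : ℤ) < 2 * T.w y z
    have hsum : 2 * ∑ z ∈ S, (bad z).card ≤ ∑ _z ∈ S, (S.card - 1) := by
      have hcount : ∀ z ∈ S, (bad z).card =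
          ∑ y ∈ S, if y ≠ z ∧ (n : ℤ) < 2 * T.w y z then 1 else 0 := by
        intro z _
        rw [← Finset.card_filter]
        congr 1
        ext y
        simp only [bad, Finset.mem_filter, Finset.mem_erase]
        tauto
      rw [Finset.sum_congr rfl hcount, two_mul]
      nth_rewrite 2 [Finset.sum_comm]
      rw [← Finset.sum_add_distrib]
      refine Finset.sum_le_sum fun z hz => ?_
      rw [← Finset.sum_add_distrib, ← Finset.add_sum_erase _ _ hz,
        ← Finset.card_erase_of_mem hz, Finset.card_eq_sum_ones]
      simp only [ne_eq, not_true_eq_false, false_and, if_false, zero_add]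
      refine Finset.sum_le_sum fun y hy => ?_
      have hyz := Finset.ne_of_mem_erase hy
      have := T.compl y z hyz
      split_ifs <;> omega
    rw [Finset.mul_sum] at hsum
    obtain ⟨z, hz, hbad⟩ := Finset.exists_le_of_sum_le hne hsum
    have hpos : 0 < S.card := Finset.card_pos.mpr hne
    have hsub : bad z ⊆ S.erase z := Finset.filter_subset _ _
    obtain ⟨Z, hZ, hZc, hdom⟩ := ih (bad z)
      (Finset.ssubset_of_subset_of_ssubset hsub (Finset.erase_ssubset hz))
    refine ⟨insert z Z, ?_, ?_, ?_⟩
    · exact Finset.insert_subset hz (hZ.trans (hsub.trans (Finset.erase_subset _ _)))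
    · calc 2 ^ (insert z Z).card ≤ 2 ^ (Z.card + 1) :=
            Nat.pow_le_pow_right (by norm_num) (Finset.card_insert_le _ _)
        _ = 2 * 2 ^ Z.card := by ring
        _ ≤ S.card + 1 := by omega
    · intro y hy
      by_cases hyz : y = z
      · exact Or.inl (by simp [hyz])
      by_cases hw : (n : ℤ) < 2 * T.w y z
      · rcases hdom y (by simp [bad, hyz, hy, hw]) with h | ⟨x, hx, h⟩
        · exact Or.inl (Finset.mem_insert_of_mem h)
        · exact Or.inr ⟨x, Finset.mem_insert_of_mem hx, h⟩
      · exact Or.inr ⟨z, Finset.mem_insert_self _ _, hyz, not_lt.mp hw⟩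

lemma exists_constructive [Fintype V] (hn : 0 < n) (T : WTournament V n) (d : V) :
    ∃ (R : Reversal T) (k : ℕ), d ∈ (T.apply R).wUC ∧ 2 ^ k ≤ Fintype.card V ∧
      R.size ≤ k * (((n / 2 : ℕ) : ℤ) + 1) := by
  classical
  obtain ⟨Z, hZ, hZc, hdom⟩ := T.exists_dominating (Finset.univ.erase d)
  have hdZ : d ∉ Z := fun h => Finset.notMem_erase d _ (hZ h)
  let c : V → ℤ := fun y => if y ∈ Z then max 0 (((n / 2 : ℕ) : ℤ) + 1 - T.w d y) else 0
  have hb : c d = 0 := if_neg hdZ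
  have h0 : ∀ y, 0 ≤ c y := by
    intro y
    simp only [c]
    split_ifs <;> simp
  have hle : ∀ y, y ≠ d → T.w d y + c y ≤ n := by
    intro y hy
    have h1 := T.compl d y hy.symm
    have h2 := T.nonneg y d hy
    simp only [c]
    split_ifs <;> omega
  have hmaj : ∀ z ∈ Z, ((n / 2 : ℕ) : ℤ) + 1 ≤ (T.apply (T.raise d c hb h0 hle)).w d z := by
    intro z hz
    rw [raise_w_left _ _ _ _ (ne_of_mem_of_not_mem hz hdZ)]
    simp only [c, if_pos hz]
    omega
  refine ⟨T.raise d c hb h0 hle, Z.card, ?_, ?_, ?_⟩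
  · rintro y ⟨hmar, hcov⟩
    have hyd : y ≠ d := by rintro rfl; simp [margin] at hmar
    rw [margin_pos_iff _ hyd] at hmar
    rcases hdom y (by simp [hyd]) with h | ⟨z, hz, hyz, hw⟩
    · have h1 := hmaj y h
      have h2 := (T.apply (T.raise d c hb h0 hle)).compl y d hyd
      omega
    · have hzd : z ≠ d := ne_of_mem_of_not_mem hz hdZ
      have h1 := hmaj z hz
      have h2 := hcov z hyz.symm hzd
      rw [raise_w_of_ne _ _ _ _ hyd hzd] at h2
      omega
  · have hpos : 0 < Fintype.card V := Fintype.card_pos_iff.mpr ⟨d⟩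
    rw [Finset.card_erase_of_mem (Finset.mem_univ d), Finset.card_univ] at hZc
    omega
  · rw [raise_size]
    simp only [c]
    rw [← Finset.sum_filter, Finset.filter_mem_eq_inter, Finset.univ_inter, ← nsmul_eq_mul]
    refine Finset.sum_le_card_nsmul _ _ _ fun y hy => ?_
    have := T.nonneg d y (ne_of_mem_of_not_mem hy hdZ).symm
    omega

/-! ### Tightness of the upper bound -/

/-- The tournament in which `a` beats everyone `2h : 0` and all other pairs are tied `h : h`. -/
def extremal [DecidableEq V] (a : V) (h : ℕ) : WTournament V (h + h) where
  w x y := if x = y then 0 else if x = a then h + h else if y = a then 0 else h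
  diag x := by simp
  nonneg x y hxy := by split_ifs <;> positivity
  compl x y hxy := by
    push_cast
    grind

lemma mem_wUC_extremal [DecidableEq V] (a : V) (h : ℕ) : a ∈ (extremal a h).wUC := by
  rintro y ⟨hmar, -⟩
  by_cases hy : y = a
  · simp [margin, hy] at hmar
  · simp [margin, extremal, hy, Ne.symm hy] at hmar
    omega

/-- The pairs `(b, a)`, `(b, z)`, `(z, a)` for `z ≠ a, b` are distinct, and only their
contributions to the size are used. -/
lemma extremal_le_size [Fintype V] [DecidableEq V] (a : V) (h : ℕ) (R : Reversal (extremal a h))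
    (hR : a ∉ ((extremal a h).apply R).wUC) :
    (h : ℤ) + 1 + ((Fintype.card V - 2 : ℕ) : ℤ) * h ≤ R.size := by
  simp only [wUC, Set.mem_ofPred_eq, not_forall, not_not] at hR
  obtain ⟨b, hmar, hcov⟩ := hR
  have hba : b ≠ a := by rintro rfl; simp [margin] at hmar
  set U : Finset V := (Finset.univ.erase a).erase b with hU
  have hbU : b ∈ Finset.univ.erase a := by simp [hba]
  have hUc : U.card = Fintype.card V - 2 := by
    rw [hU, Finset.card_erase_of_mem hbU, Finset.card_erase_of_mem (Finset.mem_univ a),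
      Finset.card_univ]
    omega
  have h1 : (h : ℤ) + 1 ≤ max (R.r b a) 0 := by
    rw [margin_pos_iff _ hba] at hmar
    simp [apply, extremal, hba] at hmar
    omega
  have h2 : ∀ z ∈ U, (h : ℤ) ≤ max (R.r b z) 0 + max (R.r z a) 0 := by
    intro z hz
    simp only [hU, Finset.mem_erase, Finset.mem_univ, and_true] at hz
    have h3 := hcov z hz.1 hz.2
    have h4 := R.antisymm z a
    simp [apply, extremal, hba, hz.2, Ne.symm hz.1, Ne.symm hz.2] at h3
    omega
  have hrow : ∀ x, 0 ≤ ∑ y ∈ Finset.univ.erase a, max (R.r x y) 0 :=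
    fun x => Finset.sum_nonneg fun _ _ => le_max_right _ _
  have hbrow : ∑ z ∈ U, max (R.r b z) 0 ≤ ∑ y ∈ Finset.univ.erase a, max (R.r b y) 0 :=
    Finset.sum_le_sum_of_subset_of_nonneg (Finset.erase_subset _ _)
      fun _ _ _ => le_max_right _ _
  have hcol : max (R.r b a) 0 + ∑ z ∈ U, max (R.r z a) 0 ≤ ∑ x, max (R.r x a) 0 := by
    rw [Finset.add_sum_erase _ (fun x => max (R.r x a) 0) hbU]
    exact Finset.sum_le_sum_of_subset_of_nonneg (Finset.erase_subset _ _)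
      fun _ _ _ => le_max_right _ _
  have hrest : ∑ y ∈ Finset.univ.erase a, max (R.r b y) 0 ≤
      ∑ x, ∑ y ∈ Finset.univ.erase a, max (R.r x y) 0 :=
    Finset.single_le_sum (fun x _ => hrow x) (Finset.mem_univ b)
  have hsize : R.size = ∑ x, max (R.r x a) 0 +
      ∑ x, ∑ y ∈ Finset.univ.erase a, max (R.r x y) 0 := by
    rw [Reversal.size, ← Finset.sum_add_distrib]
    exact Finset.sum_congr rfl fun x _ => (Finset.add_sum_erase _ _ (Finset.mem_univ a)).symm
  have hsumU : ((Fintype.card V - 2 : ℕ) : ℤ) * h ≤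
      ∑ z ∈ U, max (R.r b z) 0 + ∑ z ∈ U, max (R.r z a) 0 := by
    rw [← Finset.sum_add_distrib, ← hUc, ← nsmul_eq_mul]
    exact Finset.card_nsmul_le_sum _ _ _ h2
  linarith

end WTournament

/-- bounds on `MoV_wUC` for winners and non-winners, together with
tightness of the upper bound. -/
theorem MoV_wUC_bounds :
    (∀ (V : Type) [Fintype V] (n : ℕ), 0 < n →
      ∀ (T : WTournament V n) (a d : V),
        2 < Fintype.card V → a ∈ T.wUC → d ∉ T.wUC →
        -(Real.logb 2 (Fintype.card V) * (((n / 2 : ℕ) : ℝ) + 1)) ≤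
            ((WTournament.MoV WTournament.wUC T d : ℤ) : ℝ) ∧
          WTournament.MoV WTournament.wUC T a ≤
            (((n / 2 : ℕ) : ℤ) + 1) + ((n * (Fintype.card V - 2) / 2 : ℕ) : ℤ)) ∧
    (∀ n m : ℕ, 0 < n → Even n → 2 < m →
      ∃ (T : WTournament (Fin m) n) (a : Fin m),
        a ∈ T.wUC ∧
        WTournament.MoV WTournament.wUC T a =
          (((n / 2 : ℕ) : ℤ) + 1) + ((n * (m - 2) / 2 : ℕ) : ℤ)) := by
  constructor
  · intro V _ n hn T a d hm ha hd
    constructor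
    · obtain ⟨R, k, hR, hk, hsize⟩ := T.exists_constructive hn d
      have h1 : ((-R.size : ℤ) : ℝ) ≤ ((WTournament.MoV WTournament.wUC T d : ℤ) : ℝ) :=
        Int.cast_le.mpr (WTournament.neg_size_le_MoV hd hR)
      have h2 : (R.size : ℝ) ≤ k * (((n / 2 : ℕ) : ℝ) + 1) := by
        have := Int.cast_le (R := ℝ) |>.mpr hsize
        simpa only [Int.cast_mul, Int.cast_add, Int.cast_natCast, Int.cast_one] using this
      have h3 : (k : ℝ) ≤ Real.logb 2 (Fintype.card V) := by
        rw [Real.le_logb_iff_rpow_le (by norm_num) (by positivity), Real.rpow_natCast]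
        exact_mod_cast hk
      have h4 := mul_le_mul_of_nonneg_right h3 (by positivity : 0 ≤ ((n / 2 : ℕ) : ℝ) + 1)
      rw [Int.cast_neg] at h1
      linarith
    · obtain ⟨R, hR, hsize⟩ := T.exists_destructive hn a hm
      exact (WTournament.MoV_le_size ha hR).trans hsize
  · rintro n m hn ⟨h, rfl⟩ hm
    let a : Fin m := ⟨0, by omega⟩
    have ha := WTournament.mem_wUC_extremal a h
    obtain ⟨R, hR, hsize⟩ :=
      (WTournament.extremal a h).exists_destructive hn a (by simpa using hm)
    refine ⟨WTournament.extremal a h, a, ha, le_antisymm ?_ ?_⟩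
    · simpa using (WTournament.MoV_le_size ha hR).trans hsize
    · rw [WTournament.MoV, if_pos ha]
      refine le_csInf ⟨_, R, iff_of_true ha hR, rfl⟩ ?_
      rintro k ⟨Q, hQ, rfl⟩
      have hle := WTournament.extremal_le_size a h Q (hQ.mp ha)
      have e1 : (h + h) / 2 = h := by omega
      have e2 : (h + h) * (m - 2) / 2 = (m - 2) * h := by
        rw [← two_mul, mul_assoc, Nat.mul_div_cancel_left _ (by norm_num), mul_comm]
      rw [Fintype.card_fin] at hle
      rw [e1, e2, Nat.cast_mul]
      exact hle
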